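/- Let α ∈ (0,1) and β ∈ ℝ. For ν > 0 define θ(u;ν) = arg( D(u;ν) + i·sin((1−α)π/2) ) with D(u;ν) = (u² − (β/ν)²)/(1 + (β/ν)²)·u^{1−α} + cos((1−α)π/2), and set b_α(β,ν) = (1/π)·∫₀^∞ θ(u;ν) du and b_α = sin( (π/(3−α))·((1−α)/2) ) / sin( π/(3−α) ). Then there exist C > 0 and ν₀ > 0 such that |b_α(β,ν) − b_α| ≤ C·(β/ν)² for all ν ≥ ν₀; in particular b_α(β,ν) → b_α as ν → ∞. -/

import Mathlib

open Real Complex Set Filter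

/-- `θ(u;ν) = arg( D(u;ν) + i·sin((1−α)π/2) )` with
`D(u;ν) = (u² − (β/ν)²)/(1 + (β/ν)²)·u^{1−α} + cos((1−α)π/2)`. -/
noncomputable def thetaNu (α β : ℝ) (ν : ℝ) (u : ℝ) : ℝ :=
  Complex.arg ((((u ^ 2 - (β / ν) ^ 2) / (1 + (β / ν) ^ 2) * u ^ (1 - α)
      + Real.cos ((1 - α) * π / 2) : ℝ) : ℂ)
    + (Real.sin ((1 - α) * π / 2) : ℝ) * Complex.I)

/-- `b_α(β,ν) = (1/π)·∫₀^∞ θ(u;ν) du`. -/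
noncomputable def bAlphaNu (α β ν : ℝ) : ℝ :=
  (1 / π) * ∫ u in Set.Ioi (0:ℝ), thetaNu α β ν u

/-- `b_α = sin((π/(3−α))·((1−α)/2)) / sin(π/(3−α))`. -/
noncomputable def bAlpha (α : ℝ) : ℝ :=
  Real.sin ((π / (3 - α)) * ((1 - α) / 2)) / Real.sin (π / (3 - α))

/-! Put `φ = (1 - α)π/2` and `p = 3 - α`. The limiting angle `arg (u ^ p + e^{iφ})` is the
imaginary part of `log (u ^ p + z) - log (u ^ p + 1)` at `z = e^{iφ}`. The integral of this
difference over `u > 0` is holomorphic in `z` on the slit plane, with derivative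
`∫ (u ^ p + z)⁻¹ du`. For `z > 0` that derivative is a Gamma integral, so it is known on the slit
plane by analytic continuation, and integrating back gives `π / sin (π/p) * (z ^ (1/p) - 1)`,
whose imaginary part at `e^{iφ}` is `π b_α`.

For the rate, let `ε = (β/ν)²`. Passing from the limit to finite `ν` shifts the real part of
`u ^ p + e^{iφ}` by `O(ε (1 + u ^ p))`. This point has fixed imaginary part and modulus at least
a constant times `1 + u ^ p`, so its argument moves by only `O(ε / (1 + u ^ p))`, which is
integrable. -/

open MeasureTheory Topology

section SlitPlane

lemma ofReal_add_mem_slitPlane {t : ℝ} (ht : 0 ≤ t) {z : ℂ} (hz : z ∈ slitPlane) :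
    (t : ℂ) + z ∈ slitPlane := by
  rw [mem_slitPlane_iff] at hz ⊢
  simp only [add_re, ofReal_re, add_im, ofReal_im, zero_add]
  exact hz.imp_left (add_pos_of_nonneg_of_pos ht)

lemma isPreconnected_slitPlane : IsPreconnected slitPlane :=
  (starConvex_one_slitPlane.isPathConnected one_mem_slitPlane).isConnected.isPreconnected

lemma hasDerivAt_log_ofReal_add {t : ℝ} (ht : 0 ≤ t) {z : ℂ} (hz : z ∈ slitPlane) :
    HasDerivAt (fun w : ℂ => Complex.log (t + w)) ((t + z)⁻¹) z :=
  (hasDerivAt_log (ofReal_add_mem_slitPlane ht hz)).comp_const_add (t : ℂ) z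

-- `(t + w) / (1 + t)` lies on the segment from `1` to `w`, and the union of these segments over
-- `w ∈ K` is a compact set avoiding `0`.
lemma exists_pos_mul_one_add_le_norm_ofReal_add {K : Set ℂ} (hK : IsCompact K)
    (hKs : K ⊆ slitPlane) : ∃ k > 0, ∀ w ∈ K, ∀ t : ℝ, 0 ≤ t → k * (1 + t) ≤ ‖(t : ℂ) + w‖ := by
  let g : ℝ × ℂ → ℝ := fun q => ‖(1 - q.1) • (1 : ℂ) + q.1 • q.2‖
  have hpos : ∀ q ∈ Icc (0 : ℝ) 1 ×ˢ K, 0 < g q := fun q hq =>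
    norm_pos_iff.2 <| slitPlane_ne_zero <| starConvex_one_slitPlane (hKs hq.2)
      (sub_nonneg.2 hq.1.2) hq.1.1 (sub_add_cancel 1 q.1)
  obtain ⟨k, hk, hkg⟩ := (isCompact_Icc.prod hK).exists_forall_le' (a := 0)
    (f := g) (by fun_prop) hpos
  refine ⟨k, hk, fun w hw t ht => ?_⟩
  have h1t : 0 < 1 + t := by positivity
  have hmem : ((1 + t)⁻¹, w) ∈ Icc (0 : ℝ) 1 ×ˢ K :=
    ⟨⟨by positivity, inv_le_one_of_one_le₀ (by linarith)⟩, hw⟩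
  have hscale : (t : ℂ) + w = (1 + t : ℝ) • ((1 - (1 + t)⁻¹) • (1 : ℂ) + (1 + t)⁻¹ • w) := by
    rw [smul_add, smul_smul, smul_smul, mul_inv_cancel₀ h1t.ne', mul_sub,
      mul_inv_cancel₀ h1t.ne', mul_one, add_sub_cancel_left, one_smul, real_smul, mul_one]
  rw [hscale, norm_smul, Real.norm_of_nonneg h1t.le, mul_comm]
  exact mul_le_mul_of_nonneg_left (hkg _ hmem) h1t.le

lemma norm_inv_ofReal_add_le {k t : ℝ} (hk : 0 < k) (ht : 0 ≤ t) {w : ℂ}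
    (h : k * (1 + t) ≤ ‖(t : ℂ) + w‖) : ‖((t : ℂ) + w)⁻¹‖ ≤ k⁻¹ * (1 + t)⁻¹ := by
  rw [norm_inv, ← mul_inv]
  exact inv_anti₀ (by positivity) h

lemma exists_norm_log_ofReal_add_sub_le {z : ℂ} (hz : z ∈ slitPlane) :
    ∃ C : ℝ, ∀ t : ℝ, 0 ≤ t →
      ‖Complex.log (t + z) - Complex.log (t + 1)‖ ≤ C * (1 + t)⁻¹ := by
  have hseg : segment ℝ 1 z ⊆ slitPlane :=
    starConvex_iff_segment_subset.1 starConvex_one_slitPlane hz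
  have hcompact : IsCompact (segment ℝ 1 z) := by
    rw [← convexHull_pair]
    exact (toFinite _).isCompact_convexHull ℝ
  obtain ⟨k, hk, hkK⟩ := exists_pos_mul_one_add_le_norm_ofReal_add hcompact hseg
  refine ⟨k⁻¹ * ‖z - 1‖, fun t ht => ?_⟩
  rw [mul_right_comm]
  exact (convex_segment 1 z).norm_image_sub_le_of_norm_hasDerivWithin_le
    (fun w hw => (hasDerivAt_log_ofReal_add ht (hseg hw)).hasDerivWithinAt)
    (fun w hw => norm_inv_ofReal_add_le hk ht (hkK w hw t ht))
    (left_mem_segment ℝ 1 z) (right_mem_segment ℝ 1 z)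

lemma eqOn_slitPlane_of_eq_on_pos {f g : ℂ → ℂ} (hf : DifferentiableOn ℂ f slitPlane)
    (hg : DifferentiableOn ℂ g slitPlane) (hfg : ∀ r : ℝ, 0 < r → f r = g r) :
    EqOn f g slitPlane := by
  refine (hf.analyticOnNhd isOpen_slitPlane).eqOn_of_preconnected_of_frequently_eq
    (hg.analyticOnNhd isOpen_slitPlane) isPreconnected_slitPlane one_mem_slitPlane ?_
  have hreal : Tendsto ((↑) : ℝ → ℂ) (𝓝[≠] 1) (𝓝[≠] 1) :=
    (hasDerivAt_id' (1 : ℝ)).ofReal_comp.tendsto_nhdsNE (ofReal_ne_zero.2 one_ne_zero)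
  refine hreal.frequently (Eventually.frequently ?_)
  filter_upwards [nhdsWithin_le_nhds (lt_mem_nhds one_pos)] with r hr
  exact hfg r hr

lemma exp_ofReal_mul_I_mem_slitPlane {φ : ℝ} (hφ : φ ∈ Ioo (-π) π) :
    Complex.exp (φ * I) ∈ slitPlane := by
  refine mem_slitPlane_iff_arg.2 ⟨?_, Complex.exp_ne_zero _⟩
  rw [exp_mul_I, arg_cos_add_sin_mul_I ⟨hφ.1, hφ.2.le⟩]
  exact hφ.2.ne

lemma exp_ofReal_mul_I_cpow_ofReal {φ : ℝ} (hφ : φ ∈ Ioc (-π) π) (s : ℝ) :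
    Complex.exp (φ * I) ^ (s : ℂ) = Complex.exp ((φ * s : ℝ) * I) := by
  rw [cpow_def_of_ne_zero (Complex.exp_ne_zero _), log_exp (by simpa using hφ.1)
    (by simpa using hφ.2), ofReal_mul, mul_right_comm]

end SlitPlane

section LogIntegral

variable {X : Type*} [MeasurableSpace X] {μ : Measure X} {f : X → ℝ}

lemma integrable_log_ofReal_add_sub (hf : AEMeasurable f μ) (hf0 : ∀ᵐ x ∂μ, 0 ≤ f x)
    (hint : Integrable (fun x => (1 + f x)⁻¹) μ) {z : ℂ} (hz : z ∈ slitPlane) :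
    Integrable (fun x => Complex.log (f x + z) - Complex.log (f x + 1)) μ := by
  obtain ⟨C, hC⟩ := exists_norm_log_ofReal_add_sub_le hz
  refine (hint.const_mul C).mono' (by fun_prop) ?_
  filter_upwards [hf0] with x hx using hC _ hx

lemma integrable_inv_ofReal_add (hf : AEMeasurable f μ) (hf0 : ∀ᵐ x ∂μ, 0 ≤ f x)
    (hint : Integrable (fun x => (1 + f x)⁻¹) μ) {z : ℂ} (hz : z ∈ slitPlane) :
    Integrable (fun x => ((f x : ℂ) + z)⁻¹) μ := by
  obtain ⟨k, hk, hkz⟩ := exists_pos_mul_one_add_le_norm_ofReal_add isCompact_singleton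
    (singleton_subset_iff.2 hz)
  refine (hint.const_mul k⁻¹).mono' (by fun_prop) ?_
  filter_upwards [hf0] with x hx using norm_inv_ofReal_add_le hk hx (hkz z rfl _ hx)

lemma hasDerivAt_integral_log_ofReal_add_sub (hf : AEMeasurable f μ) (hf0 : ∀ᵐ x ∂μ, 0 ≤ f x)
    (hint : Integrable (fun x => (1 + f x)⁻¹) μ) {z : ℂ} (hz : z ∈ slitPlane) :
    HasDerivAt (fun w : ℂ => ∫ x, (Complex.log (f x + w) - Complex.log (f x + 1)) ∂μ)
      (∫ x, ((f x : ℂ) + z)⁻¹ ∂μ) z := by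
  obtain ⟨K, hKz, hKs, hK⟩ := local_compact_nhds (isOpen_slitPlane.mem_nhds hz)
  obtain ⟨k, hk, hkK⟩ := exists_pos_mul_one_add_le_norm_ofReal_add hK hKs
  refine (hasDerivAt_integral_of_dominated_loc_of_deriv_le (s := K)
    (F' := fun w x => ((f x : ℂ) + w)⁻¹) (bound := fun x => k⁻¹ * (1 + f x)⁻¹) hKz
    (.of_forall fun w => by fun_prop) (integrable_log_ofReal_add_sub hf hf0 hint hz)
    (by fun_prop) ?_ (hint.const_mul _) ?_).2
  · filter_upwards [hf0] with x hx w hw using norm_inv_ofReal_add_le hk hx (hkK w hw _ hx)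
  · filter_upwards [hf0] with x hx w hw
    exact (hasDerivAt_log_ofReal_add hx (hKs hw)).sub_const (Complex.log (f x + 1))

lemma differentiableOn_integral_inv_ofReal_add (hf : AEMeasurable f μ)
    (hf0 : ∀ᵐ x ∂μ, 0 ≤ f x) (hint : Integrable (fun x => (1 + f x)⁻¹) μ) :
    DifferentiableOn ℂ (fun z : ℂ => ∫ x, ((f x : ℂ) + z)⁻¹ ∂μ) slitPlane := by
  have hderiv := fun (z : ℂ) (hz : z ∈ slitPlane) =>
    hasDerivAt_integral_log_ofReal_add_sub hf hf0 hint hz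
  refine DifferentiableOn.congr (DifferentiableOn.deriv (fun z hz =>
    (hderiv z hz).differentiableAt.differentiableWithinAt) isOpen_slitPlane) ?_
  exact fun z hz => (hderiv z hz).deriv.symm

end LogIntegral

section PowerIntegrals

lemma ae_restrict_Ioi_rpow_nonneg (p : ℝ) :
    ∀ᵐ u ∂volume.restrict (Ioi (0 : ℝ)), 0 ≤ u ^ p :=
  (ae_restrict_mem measurableSet_Ioi).mono fun _ hu => Real.rpow_nonneg (le_of_lt hu) p

variable {p : ℝ}

lemma add_rpow_le_two_rpow_mul_rpow_add_rpow {x y : ℝ} (hx : 0 ≤ x) (hy : 0 ≤ y) (hp : 1 ≤ p) :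
    (x + y) ^ p ≤ 2 ^ (p - 1) * (x ^ p + y ^ p) := by
  lift x to NNReal using hx
  lift y to NNReal using hy
  exact_mod_cast NNReal.rpow_add_le_mul_rpow_add_rpow x y hp

lemma integrableOn_inv_one_add_rpow (hp : 1 < p) :
    IntegrableOn (fun u : ℝ => (1 + u ^ p)⁻¹) (Ioi 0) := by
  refine ((integrableOn_add_rpow_Ioi_of_lt (a := -p) (c := 0) (m := 1) (by linarith)
    (by norm_num)).const_mul (2 ^ (p - 1))).mono' (by fun_prop) ?_
  filter_upwards [ae_restrict_mem measurableSet_Ioi] with u hu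
  have hu : 0 < u := hu
  have hpow := add_rpow_le_two_rpow_mul_rpow_add_rpow hu.le zero_le_one hp.le
  rw [Real.one_rpow] at hpow
  rw [Real.norm_of_nonneg (by positivity), Real.rpow_neg (by positivity), ← div_eq_mul_inv,
    inv_le_comm₀ (by positivity) (by positivity), inv_div, div_le_iff₀ (by positivity)]
  linarith

lemma integrableOn_inv_rpow_add (hp : 1 < p) {z : ℂ} (hz : z ∈ slitPlane) :
    IntegrableOn (fun u : ℝ => (((u ^ p : ℝ) : ℂ) + z)⁻¹) (Ioi 0) :=
  integrable_inv_ofReal_add (by fun_prop) (ae_restrict_Ioi_rpow_nonneg p)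
    (integrableOn_inv_one_add_rpow hp) hz

lemma integrableOn_log_rpow_add_sub (hp : 1 < p) {z : ℂ} (hz : z ∈ slitPlane) :
    IntegrableOn
      (fun u : ℝ => Complex.log ((u ^ p : ℝ) + z) - Complex.log ((u ^ p : ℝ) + 1)) (Ioi 0) :=
  integrable_log_ofReal_add_sub (by fun_prop) (ae_restrict_Ioi_rpow_nonneg p)
    (integrableOn_inv_one_add_rpow hp) hz

lemma integrableOn_inv_rpow_add_real (hp : 1 < p) {r : ℝ} (hr : 0 < r) :
    IntegrableOn (fun u : ℝ => (u ^ p + r)⁻¹) (Ioi 0) := by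
  have h := (integrableOn_inv_rpow_add hp (ofReal_mem_slitPlane.2 hr)).re
  simpa only [← ofReal_add, ← ofReal_inv, RCLike.re_to_complex, ofReal_re, IntegrableOn] using h

lemma integral_exp_neg_mul_Ioi {c : ℝ} (hc : 0 < c) :
    ∫ x in Ioi (0 : ℝ), Real.exp (-c * x) = c⁻¹ := by
  rw [integral_exp_mul_Ioi (neg_lt_zero.2 hc), mul_zero, Real.exp_zero, neg_div_neg_eq, one_div]

lemma integrable_exp_neg_rpow_add_mul (hp : 1 < p) {r : ℝ} (hr : 0 < r) :
    Integrable (Function.uncurry fun u x : ℝ => Real.exp (-(u ^ p + r) * x))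
      ((volume.restrict (Ioi 0)).prod (volume.restrict (Ioi 0))) := by
  have hpos : ∀ u ∈ Ioi (0 : ℝ), 0 < u ^ p + r := fun u hu =>
    add_pos (Real.rpow_pos_of_pos hu p) hr
  refine (integrable_prod_iff (by fun_prop)).2 ⟨?_, ?_⟩
  · filter_upwards [ae_restrict_mem measurableSet_Ioi] with u hu
    exact integrableOn_exp_mul_Ioi (neg_lt_zero.2 (hpos u hu)) 0
  · refine (integrableOn_inv_rpow_add_real hp hr).congr_fun (fun u hu => ?_) measurableSet_Ioi
    simp only [Function.uncurry, Real.norm_eq_abs, Real.abs_exp]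
    exact (integral_exp_neg_mul_Ioi (hpos u hu)).symm

-- Writing `(u ^ p + r)⁻¹` as a Laplace transform and exchanging the integrals turns the left side
-- into a product of two Gamma integrals, which the reflection formula evaluates.
lemma integral_inv_rpow_add_real (hp : 1 < p) {r : ℝ} (hr : 0 < r) :
    ∫ u in Ioi (0 : ℝ), (u ^ p + r)⁻¹ = π / p / Real.sin (π / p) * r ^ (1 / p - 1) := by
  have hp0 : 0 < p := one_pos.trans hp
  have hp1 : 1 / p < 1 := (div_lt_one hp0).2 hp
  have hlaplace : ∀ u ∈ Ioi (0 : ℝ),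
      (u ^ p + r)⁻¹ = ∫ x in Ioi (0 : ℝ), Real.exp (-(u ^ p + r) * x) := fun u hu =>
    (integral_exp_neg_mul_Ioi (add_pos (Real.rpow_pos_of_pos hu p) hr)).symm
  have hinner : ∀ x ∈ Ioi (0 : ℝ), ∫ u in Ioi (0 : ℝ), Real.exp (-(u ^ p + r) * x)
      = Real.Gamma (1 / p + 1) * (x ^ ((1 - 1 / p) - 1) * Real.exp (-(r * x))) := fun x hx => by
    have hsplit : ∀ u : ℝ,
        Real.exp (-(u ^ p + r) * x) = Real.exp (-x * u ^ p) * Real.exp (-(r * x)) := fun u => by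
      rw [← Real.exp_add]; ring_nf
    simp_rw [hsplit]
    rw [integral_mul_const, integral_exp_neg_mul_rpow hp0 hx,
      show (1 - 1 / p) - 1 = -1 / p by ring]
    ring
  have hreflection := Real.Gamma_mul_Gamma_one_sub (1 / p)
  rw [mul_one_div] at hreflection
  calc ∫ u in Ioi (0 : ℝ), (u ^ p + r)⁻¹
      = ∫ x in Ioi (0 : ℝ), ∫ u in Ioi (0 : ℝ), Real.exp (-(u ^ p + r) * x) := by
        rw [setIntegral_congr_fun measurableSet_Ioi hlaplace,
          integral_integral_swap (integrable_exp_neg_rpow_add_mul hp hr)]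
    _ = Real.Gamma (1 / p + 1) * ((1 / r) ^ (1 - 1 / p) * Real.Gamma (1 - 1 / p)) := by
        rw [setIntegral_congr_fun measurableSet_Ioi hinner, integral_const_mul,
          Real.integral_rpow_mul_exp_neg_mul_Ioi (sub_pos.2 hp1) hr]
    _ = 1 / p * (Real.Gamma (1 / p) * Real.Gamma (1 - 1 / p)) * r ^ (1 / p - 1) := by
        rw [Real.Gamma_add_one (by positivity), one_div r, Real.inv_rpow hr.le,
          ← Real.rpow_neg hr.le, neg_sub]
        ring
    _ = π / p / Real.sin (π / p) * r ^ (1 / p - 1) := by rw [hreflection]; ring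

lemma integral_inv_rpow_add (hp : 1 < p) {z : ℂ} (hz : z ∈ slitPlane) :
    ∫ u in Ioi (0 : ℝ), (((u ^ p : ℝ) : ℂ) + z)⁻¹
      = ((π / p / Real.sin (π / p) : ℝ) : ℂ) * z ^ (1 / p - 1 : ℂ) := by
  refine eqOn_slitPlane_of_eq_on_pos
    (differentiableOn_integral_inv_ofReal_add (by fun_prop) (ae_restrict_Ioi_rpow_nonneg p)
      (integrableOn_inv_one_add_rpow hp))
    (fun w hw =>
      ((differentiableAt_fun_id.cpow_const hw).const_mul _).differentiableWithinAt)
    (fun r hr => ?_) hz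
  have hreal := congrArg ((↑) : ℝ → ℂ) (integral_inv_rpow_add_real hp hr)
  rw [← integral_complex_ofReal, ofReal_mul, ofReal_cpow hr.le] at hreal
  simpa only [ofReal_inv, ofReal_add, ofReal_sub, ofReal_div, ofReal_one] using hreal

lemma integral_log_rpow_add_sub (hp : 1 < p) {z : ℂ} (hz : z ∈ slitPlane) :
    ∫ u in Ioi (0 : ℝ), (Complex.log ((u ^ p : ℝ) + z) - Complex.log ((u ^ p : ℝ) + 1))
      = ((π / Real.sin (π / p) : ℝ) : ℂ) * (z ^ (1 / p : ℂ) - 1) := by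
  have hpC : (p : ℂ) ≠ 0 := ofReal_ne_zero.2 (one_pos.trans hp).ne'
  have hleft := fun (w : ℂ) (hw : w ∈ slitPlane) =>
    hasDerivAt_integral_log_ofReal_add_sub (by fun_prop) (ae_restrict_Ioi_rpow_nonneg p)
      (integrableOn_inv_one_add_rpow hp) hw
  have hright : ∀ w ∈ slitPlane, HasDerivAt
      (fun w : ℂ => ((π / Real.sin (π / p) : ℝ) : ℂ) * (w ^ (1 / p : ℂ) - 1))
      (((π / p / Real.sin (π / p) : ℝ) : ℂ) * w ^ (1 / p - 1 : ℂ)) w := fun w hw => by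
    refine ((((hasDerivAt_id' w).cpow_const hw).sub_const 1).const_mul _).congr_deriv ?_
    push_cast
    field_simp
  refine isOpen_slitPlane.eqOn_of_deriv_eq
    isPreconnected_slitPlane (fun w hw => (hleft w hw).differentiableAt.differentiableWithinAt)
    (fun w hw => (hright w hw).differentiableAt.differentiableWithinAt)
    (fun w hw => ?_) one_mem_slitPlane ?_ hz
  · rw [(hleft w hw).deriv, (hright w hw).deriv, integral_inv_rpow_add hp hw]
  · simp only [sub_self, integral_zero, one_cpow, mul_zero]

lemma im_log_ofReal_add_sub {t : ℝ} (ht : 0 ≤ t) (z : ℂ) :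
    (Complex.log (t + z) - Complex.log (t + 1)).im = Complex.arg (t + z) := by
  have hreal : Complex.arg ((t : ℂ) + 1) = 0 := by
    exact_mod_cast arg_ofReal_of_nonneg (by positivity : 0 ≤ t + 1)
  rw [sub_im, log_im, log_im, hreal, sub_zero]

lemma integrableOn_arg_rpow_add (hp : 1 < p) {z : ℂ} (hz : z ∈ slitPlane) :
    IntegrableOn (fun u : ℝ => Complex.arg ((u ^ p : ℝ) + z)) (Ioi 0) := by
  refine (integrableOn_log_rpow_add_sub hp hz).im.congr ?_
  filter_upwards [ae_restrict_Ioi_rpow_nonneg p] with u hu using im_log_ofReal_add_sub hu z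

lemma integral_arg_rpow_add (hp : 1 < p) {z : ℂ} (hz : z ∈ slitPlane) :
    ∫ u in Ioi (0 : ℝ), Complex.arg ((u ^ p : ℝ) + z)
      = π / Real.sin (π / p) * (z ^ (1 / p : ℂ)).im := by
  calc ∫ u in Ioi (0 : ℝ), Complex.arg ((u ^ p : ℝ) + z)
      = ∫ u in Ioi (0 : ℝ),
          (Complex.log ((u ^ p : ℝ) + z) - Complex.log ((u ^ p : ℝ) + 1)).im :=
        integral_congr_ae <| (ae_restrict_Ioi_rpow_nonneg p).mono fun u hu =>
          (im_log_ofReal_add_sub hu z).symm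
    _ = (∫ u in Ioi (0 : ℝ),
          (Complex.log ((u ^ p : ℝ) + z) - Complex.log ((u ^ p : ℝ) + 1))).im :=
        integral_im (integrableOn_log_rpow_add_sub hp hz)
    _ = π / Real.sin (π / p) * (z ^ (1 / p : ℂ)).im := by
        rw [integral_log_rpow_add_sub hp hz, im_ofReal_mul, sub_im, one_im, sub_zero]

end PowerIntegrals

section Perturbation

lemma add_ofReal_mem_slitPlane {z : ℂ} (hz : z ∈ slitPlane) {x : ℝ} (hx : |x| < ‖z‖) :
    z + x ∈ slitPlane := by
  rw [mem_slitPlane_iff] at hz ⊢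
  simp only [add_re, ofReal_re, add_im, ofReal_im, add_zero]
  by_cases him : z.im = 0
  · have hre : 0 < z.re := hz.resolve_right (not_not.2 him)
    rw [← abs_re_eq_norm.2 him, abs_of_pos hre] at hx
    exact Or.inl (by linarith [neg_abs_le x])
  · exact Or.inr him

lemma hasDerivAt_arg_add_ofReal {z : ℂ} {x : ℝ} (hzx : z + x ∈ slitPlane) :
    HasDerivAt (fun y : ℝ => Complex.arg (z + y)) (-z.im / ‖z + x‖ ^ 2) x := by
  have hlog := (((hasDerivAt_id' x).ofReal_comp).const_add z).clog_real hzx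
  have him := imCLM.hasFDerivAt.comp_hasDerivAt x hlog
  simp only [Function.comp_def, imCLM_apply, log_im] at him
  refine him.congr_deriv ?_
  simp [normSq_eq_norm_sq, neg_div]

lemma abs_arg_add_ofReal_sub_arg_le {z : ℂ} (hz : z ∈ slitPlane) {m δ : ℝ} (hm : 0 < m)
    (h : |δ| + m ≤ ‖z‖) : |Complex.arg (z + δ) - Complex.arg z| ≤ |z.im| / m ^ 2 * |δ| := by
  have hball : ∀ x ∈ Metric.closedBall (0 : ℝ) |δ|, |x| + m ≤ ‖z‖ := fun x hx => by
    rw [mem_closedBall_zero_iff, Real.norm_eq_abs] at hx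
    linarith
  have hbound : ∀ x ∈ Metric.closedBall (0 : ℝ) |δ|,
      ‖-z.im / ‖z + x‖ ^ 2‖ ≤ |z.im| / m ^ 2 := fun x hx => by
    have hnorm : m ≤ ‖z + x‖ := by
      have := norm_sub_le_norm_add z x
      rw [norm_real, Real.norm_eq_abs] at this
      linarith [hball x hx]
    rw [norm_div, norm_neg, Real.norm_eq_abs, norm_pow, norm_norm]
    gcongr
  simpa using (convex_closedBall (0 : ℝ) |δ|).norm_image_sub_le_of_norm_hasDerivWithin_le
    (fun x hx => (hasDerivAt_arg_add_ofReal (add_ofReal_mem_slitPlane hz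
      (by linarith [hball x hx]))).hasDerivWithinAt) hbound
    (Metric.mem_closedBall_self (abs_nonneg δ)) (by simp : δ ∈ Metric.closedBall 0 |δ|)

lemma exists_abs_arg_ofReal_add_add_sub_le {z : ℂ} (hz : z ∈ slitPlane) :
    ∃ C : ℝ, ∃ c > 0, ∀ ε t x : ℝ, 0 ≤ t → ε ≤ c → |x| ≤ ε * (1 + t) →
      |Complex.arg ((t : ℂ) + z + x) - Complex.arg (t + z)| ≤ C * ε * (1 + t)⁻¹ := by
  obtain ⟨k, hk, hkz⟩ := exists_pos_mul_one_add_le_norm_ofReal_add isCompact_singleton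
    (singleton_subset_iff.2 hz)
  refine ⟨|z.im| / (k / 2) ^ 2, k / 2, half_pos hk, fun ε t x ht hε hx => ?_⟩
  have h1t : 0 < 1 + t := by positivity
  have hgap : |x| + k / 2 * (1 + t) ≤ ‖(t : ℂ) + z‖ := by
    have := mul_le_mul_of_nonneg_right hε h1t.le
    linarith [hkz z rfl t ht]
  calc |Complex.arg ((t : ℂ) + z + x) - Complex.arg (t + z)|
      ≤ |((t : ℂ) + z).im| / (k / 2 * (1 + t)) ^ 2 * |x| :=
        abs_arg_add_ofReal_sub_arg_le (ofReal_add_mem_slitPlane ht hz) (by positivity) hgap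
    _ ≤ |((t : ℂ) + z).im| / (k / 2 * (1 + t)) ^ 2 * (ε * (1 + t)) := by gcongr
    _ = |z.im| / (k / 2) ^ 2 * ε * (1 + t)⁻¹ := by
        rw [add_im, ofReal_im, zero_add]
        field_simp

lemma abs_div_mul_rpow_sub_rpow_le {a ε u : ℝ} (ha : 0 ≤ a) (hε : 0 ≤ ε) (hu : 0 < u) :
    |(u ^ 2 - ε) / (1 + ε) * u ^ a - u ^ (a + 2)| ≤ 2 * ε * (1 + u ^ (a + 2)) := by
  have hpow : u ^ (a + 2) = u ^ a * u ^ 2 := by rw [Real.rpow_add hu, Real.rpow_two]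
  have hlow : u ^ a ≤ 1 + u ^ (a + 2) := by
    rcases le_total u 1 with h | h
    · exact (Real.rpow_le_one hu.le h ha).trans (le_add_of_nonneg_right (by positivity))
    · exact (Real.rpow_le_rpow_of_exponent_le h (by linarith)).trans
        (le_add_of_nonneg_left zero_le_one)
  have hdiff : (u ^ 2 - ε) / (1 + ε) * u ^ a - u ^ (a + 2)
      = -(ε / (1 + ε) * (u ^ a + u ^ (a + 2))) := by
    rw [hpow]; field_simp; ring
  rw [hdiff, abs_neg, abs_of_nonneg (by positivity)]
  calc ε / (1 + ε) * (u ^ a + u ^ (a + 2))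
      ≤ ε * (u ^ a + u ^ (a + 2)) := by
        gcongr
        exact div_le_self hε (by linarith)
    _ ≤ ε * (2 * (1 + u ^ (a + 2))) := by
        gcongr
        linarith [Real.rpow_nonneg hu.le (a + 2)]
    _ = 2 * ε * (1 + u ^ (a + 2)) := by ring

lemma exists_abs_integral_arg_sub_le {a : ℝ} (ha : 0 ≤ a) {z : ℂ} (hz : z ∈ slitPlane) :
    ∃ C : ℝ, ∃ c > 0, ∀ ε ∈ Icc 0 c,
      |(∫ u in Ioi (0 : ℝ), Complex.arg (((u ^ 2 - ε) / (1 + ε) * u ^ a : ℝ) + z))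
        - ∫ u in Ioi (0 : ℝ), Complex.arg ((u ^ (a + 2) : ℝ) + z)| ≤ C * ε := by
  obtain ⟨C, c, hc, hC⟩ := exists_abs_arg_ofReal_add_add_sub_le hz
  have hp : 1 < a + 2 := by linarith
  refine ⟨C * 2 * ∫ u in Ioi (0 : ℝ), (1 + u ^ (a + 2))⁻¹, c / 2, half_pos hc,
    fun ε ⟨hε, hεc⟩ => ?_⟩
  have hlimit := integrableOn_arg_rpow_add hp hz
  have hdom := (integrableOn_inv_one_add_rpow hp).const_mul (C * (2 * ε))
  have hbound : ∀ᵐ u ∂volume.restrict (Ioi (0 : ℝ)),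
      ‖Complex.arg (((u ^ 2 - ε) / (1 + ε) * u ^ a : ℝ) + z)
        - Complex.arg ((u ^ (a + 2) : ℝ) + z)‖ ≤ C * (2 * ε) * (1 + u ^ (a + 2))⁻¹ := by
    filter_upwards [ae_restrict_mem measurableSet_Ioi] with u hu
    have h := hC (2 * ε) (u ^ (a + 2)) _ (Real.rpow_nonneg (le_of_lt hu) _) (by linarith)
      (abs_div_mul_rpow_sub_rpow_le ha hε hu)
    rwa [ofReal_sub, add_right_comm, add_sub_cancel] at h
  have hperturbed : IntegrableOn
      (fun u : ℝ => Complex.arg (((u ^ 2 - ε) / (1 + ε) * u ^ a : ℝ) + z)) (Ioi 0) := by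
    refine (hlimit.add (hdom.mono' (by fun_prop) hbound)).congr (.of_forall fun u => ?_)
    exact add_sub_cancel _ _
  rw [← integral_sub hperturbed hlimit, ← Real.norm_eq_abs]
  refine (norm_integral_le_of_norm_le hdom hbound).trans_eq ?_
  rw [integral_const_mul]
  ring

end Perturbation

lemma thetaNu_eq_arg_add_exp (α β ν u : ℝ) :
    thetaNu α β ν u = Complex.arg
      (((u ^ 2 - (β / ν) ^ 2) / (1 + (β / ν) ^ 2) * u ^ (1 - α) : ℝ)
        + Complex.exp (((1 - α) * π / 2 : ℝ) * I)) := by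
  rw [thetaNu, exp_mul_I, ofReal_add, ← ofReal_cos, ← ofReal_sin, add_assoc]

lemma one_sub_mul_pi_div_two_mem_Ioo {α : ℝ} (hα : α ∈ Ioc (-1 : ℝ) 1) :
    (1 - α) * π / 2 ∈ Ioo (-π) π := by
  obtain ⟨hα₁, hα₂⟩ := hα
  constructor <;> nlinarith [Real.pi_pos]

lemma bAlpha_eq_integral_arg {α : ℝ} (hα : α ∈ Ioc (-1 : ℝ) 1) :
    bAlpha α = 1 / π * ∫ u in Ioi (0 : ℝ),
      Complex.arg ((u ^ (1 - α + 2) : ℝ) + Complex.exp (((1 - α) * π / 2 : ℝ) * I)) := by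
  have hφ := one_sub_mul_pi_div_two_mem_Ioo hα
  rw [integral_arg_rpow_add (by linarith [hα.2]) (exp_ofReal_mul_I_mem_slitPlane hφ),
    show (1 / (1 - α + 2 : ℝ) : ℂ) = ((1 / (1 - α + 2) : ℝ) : ℂ) by push_cast; rfl,
    exp_ofReal_mul_I_cpow_ofReal ⟨hφ.1, hφ.2.le⟩, exp_ofReal_mul_I_im, bAlpha,
    show 1 - α + 2 = 3 - α by ring,
    show (1 - α) * π / 2 * (1 / (3 - α)) = π / (3 - α) * ((1 - α) / 2) by ring]
  field_simp

lemma exists_abs_bAlphaNu_sub_bAlpha_le {α : ℝ} (hα : α ∈ Ioc (-1 : ℝ) 1) :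
    ∃ C > 0, ∃ c > 0, ∀ β ν : ℝ, (β / ν) ^ 2 ≤ c →
      |bAlphaNu α β ν - bAlpha α| ≤ C * (β / ν) ^ 2 := by
  obtain ⟨C, c, hc, hC⟩ := exists_abs_integral_arg_sub_le (sub_nonneg.2 hα.2)
    (exp_ofReal_mul_I_mem_slitPlane (one_sub_mul_pi_div_two_mem_Ioo hα))
  refine ⟨max (1 / π * C) 1, by positivity, c, hc, fun β ν hβν => ?_⟩
  rw [bAlpha_eq_integral_arg hα, bAlphaNu]
  simp_rw [thetaNu_eq_arg_add_exp]
  rw [← mul_sub, abs_mul, abs_of_pos (by positivity : 0 < 1 / π)]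
  calc _ ≤ 1 / π * (C * (β / ν) ^ 2) := by
        gcongr
        exact hC _ ⟨sq_nonneg _, hβν⟩
    _ = 1 / π * C * (β / ν) ^ 2 := (mul_assoc ..).symm
    _ ≤ max (1 / π * C) 1 * (β / ν) ^ 2 := by
        gcongr
        exact le_max_left ..

theorem bAlphaNu_approx_bAlpha_general (α β : ℝ) (hα : α ∈ Set.Ioc (-1 : ℝ) 1) :
    (∃ C : ℝ, 0 < C ∧ ∃ ν₀ : ℝ, 0 < ν₀ ∧
      ∀ ν : ℝ, ν₀ ≤ ν → |bAlphaNu α β ν - bAlpha α| ≤ C * (β / ν) ^ 2) ∧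
    Tendsto (fun ν : ℝ => bAlphaNu α β ν) atTop (nhds (bAlpha α)) := by
  obtain ⟨C, hC, c, hc, h⟩ := exists_abs_bAlphaNu_sub_bAlpha_le hα
  have hsq : Tendsto (fun ν : ℝ => (β / ν) ^ 2) atTop (𝓝 0) := by
    simpa using (tendsto_id.const_div_atTop β).pow 2
  have hbound : ∀ᶠ ν in atTop, |bAlphaNu α β ν - bAlpha α| ≤ C * (β / ν) ^ 2 :=
    (hsq.eventually_le_const hc).mono (h β)
  refine ⟨?_, ?_⟩
  · obtain ⟨ν₀, hν₀⟩ := eventually_atTop.1 hbound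
    exact ⟨C, hC, max ν₀ 1, by positivity, fun ν hν => hν₀ ν (le_of_max_le_left hν)⟩
  · rw [tendsto_iff_norm_sub_tendsto_zero]
    exact squeeze_zero' (.of_forall fun _ => norm_nonneg _) hbound (by simpa using hsq.const_mul C)

/-- `|b_α(β,ν) − b_α| ≤ C·(β/ν)²` for all large `ν`; in particular
`b_α(β,ν) → b_α` as `ν → ∞`. -/
theorem bAlphaNu_approx_bAlpha
    (α β : ℝ) (hα : α ∈ Set.Ioo (0:ℝ) 1) :
    (∃ C : ℝ, 0 < C ∧ ∃ ν₀ : ℝ, 0 < ν₀ ∧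
      ∀ ν : ℝ, ν₀ ≤ ν → |bAlphaNu α β ν - bAlpha α| ≤ C * (β / ν) ^ 2) ∧
    Tendsto (fun ν : ℝ => bAlphaNu α β ν) atTop (nhds (bAlpha α)) :=
  bAlphaNu_approx_bAlpha_general α β ⟨by linarith [hα.1], hα.2.le⟩
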